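/- arXiv:1010.2296 — 3 statements merged into one kernel-verified Lean document; each statement's English description precedes it below -/
import Mathlib

section
/- Let G be a finite connected simple graph and let D ⊆ V(G) be a connected two-way dominating set of G (that is, D is a dominating set, the induced subgraph G[D] is connected, and D contains every pendant vertex of G). Then the rainbow connection number of G satisfies rc(G) ≤ rc(G[D]) + 3. -/
open SimpleGraph Set

/-- The predicate that an edge colouring `c` makes `G` rainbow connected: every pair of
vertices is joined by a path no two of whose edges receive the same colour. -/
def RainbowConnectedUnder {V : Type*} (G : SimpleGraph V) (c : Sym2 V → ℕ) : Prop :=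
  ∀ u v : V, ∃ p : G.Walk u v, p.IsPath ∧ (p.edges.map c).Nodup

/-- The rainbow connection number of `G`: the least `n` such that some edge colouring
using colours `< n` makes `G` rainbow connected. -/
noncomputable def rc {V : Type*} (G : SimpleGraph V) : ℕ :=
  sInf {n | ∃ c : Sym2 V → ℕ, (∀ e ∈ G.edgeSet, c e < n) ∧ RainbowConnectedUnder G c}

/-- Degree of a vertex (as the cardinality of its neighbour set). -/
noncomputable def deg {V : Type*} (G : SimpleGraph V) (v : V) : ℕ := (G.neighborSet v).ncard

/-- `D` is a dominating set of `G`. -/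
def IsDominatingSet {V : Type*} (G : SimpleGraph V) (D : Set V) : Prop :=
  ∀ v : V, v ∈ D ∨ ∃ u ∈ D, G.Adj u v

/-- The connected domination number of `G`. -/
noncomputable def connDomNum {V : Type*} (G : SimpleGraph V) : ℕ :=
  sInf {n | ∃ D : Set V, D.ncard = n ∧ IsDominatingSet G D ∧ (G.induce D).Connected}

/-- Distance of a vertex `v` to a set of vertices `D`. -/
noncomputable def distSet {V : Type*} (G : SimpleGraph V) (D : Set V) (v : V) : ℕ :=
  sInf ((fun u => G.dist u v) '' D)

/-- Diameter of `G`. -/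
noncomputable def graphDiam {V : Type*} (G : SimpleGraph V) : ℕ :=
  sSup (Set.range fun p : V × V => G.dist p.1 p.2)

/-- Eccentricity of a vertex. -/
noncomputable def ecc {V : Type*} (G : SimpleGraph V) (v : V) : ℕ :=
  sSup (Set.range fun u => G.dist v u)

/-- Radius of `G`. -/
noncomputable def graphRadius {V : Type*} (G : SimpleGraph V) : ℕ :=
  sInf (Set.range fun v => ecc G v)

/-- `G` is an interval graph: vertices can be assigned nonempty closed real intervals such
that two distinct vertices are adjacent iff their intervals intersect. -/
def IsIntervalGraph {V : Type*} (G : SimpleGraph V) : Prop :=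
  ∃ a b : V → ℝ, (∀ v, a v ≤ b v) ∧
    ∀ u v : V, u ≠ v → (G.Adj u v ↔ (Set.Icc (a u) (b u) ∩ Set.Icc (a v) (b v)).Nonempty)

/-- `G` is a unit interval graph. -/
def IsUnitIntervalGraph {V : Type*} (G : SimpleGraph V) : Prop :=
  ∃ a : V → ℝ,
    ∀ u v : V, u ≠ v →
      (G.Adj u v ↔ (Set.Icc (a u) (a u + 1) ∩ Set.Icc (a v) (a v + 1)).Nonempty)

/-- `G` is a circular arc graph: vertices can be assigned nonempty closed arcs of a circle
(images of closed intervals in `AddCircle 1`) such that two distinct vertices are adjacent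
iff their arcs intersect. -/
def IsCircularArcGraph {V : Type*} (G : SimpleGraph V) : Prop :=
  ∃ a b : V → ℝ, (∀ v, a v ≤ b v) ∧
    ∀ u v : V, u ≠ v → (G.Adj u v ↔
      (((fun x : ℝ => (x : AddCircle (1:ℝ))) '' Set.Icc (a u) (b u)) ∩
        ((fun x : ℝ => (x : AddCircle (1:ℝ))) '' Set.Icc (a v) (b v))).Nonempty)

/-- There is a path from `x` to `y` avoiding the closed neighbourhood of `z`. -/
def HasAvoidingPath {V : Type*} (G : SimpleGraph V) (x y z : V) : Prop :=
  ∃ p : G.Walk x y, p.IsPath ∧ ∀ w ∈ p.support, w ≠ z ∧ ¬ G.Adj z w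

/-- `G` is AT-free: it has no asteroidal triple. -/
def IsATFree {V : Type*} (G : SimpleGraph V) : Prop :=
  ¬ ∃ x y z : V, x ≠ y ∧ y ≠ z ∧ x ≠ z ∧ ¬G.Adj x y ∧ ¬G.Adj y z ∧ ¬G.Adj x z ∧
    HasAvoidingPath G x y z ∧ HasAvoidingPath G y z x ∧ HasAvoidingPath G x z y

/-- `G` is a threshold graph. -/
def IsThresholdGraph {V : Type*} (G : SimpleGraph V) : Prop :=
  ∃ (w : V → ℝ) (t : ℝ), ∀ u v : V, u ≠ v → (G.Adj u v ↔ t ≤ w u + w v)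

/-- `G` is a chain graph: bipartite with the neighbourhoods of one side linearly ordered
by inclusion. -/
def IsChainGraph {V : Type*} (G : SimpleGraph V) : Prop :=
  ∃ A B : Set V, A ∪ B = Set.univ ∧ Disjoint A B ∧
    (∀ u v : V, G.Adj u v → ¬(u ∈ A ∧ v ∈ A) ∧ ¬(u ∈ B ∧ v ∈ B)) ∧
    ∀ a₁ ∈ A, ∀ a₂ ∈ A,
      G.neighborSet a₁ ⊆ G.neighborSet a₂ ∨ G.neighborSet a₂ ⊆ G.neighborSet a₁

/-- `G` is chordal: it has no induced cycle of length greater than 3. -/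
def IsChordal {V : Type*} (G : SimpleGraph V) : Prop :=
  ∀ n : ℕ, 4 ≤ n → IsEmpty (SimpleGraph.cycleGraph n ↪g G)
/-!
Choose a maximal independent set `X` of `G - D` and, for every vertex `v` outside `D`, a neighbour
`foot v` in `D`. Keep an optimal colouring of `G[D]`, with colours `< n`, and use three new
colours: `n` for the edges from `x ∈ X` to `foot x`, `n + 1` for all other edges between `D` and
its complement, and `n + 2` for the edges outside `D`. Every vertex outside `D` then reaches `D`
by one edge coloured `n` or `n + 1`, and by a second route avoiding that colour. For `x ∈ X` the
second route runs through a neighbour outside `D` (which is not in `X`), or else through a second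
neighbour in `D`, as `x` is not pendant; for `v ∉ X` it runs through a neighbour in `X`, by
maximality. Two vertices whose first edges have different colours are joined along these edges; if
the colours agree, one of the two vertices uses its second route.
-/

/-- `RainbowColorable G n` states that the colours `< n` suffice to make `G` rainbow connected, so
that `rc G` is the least such `n`. As in the definition of `rc`, only the colours of edges of `G`
are constrained. -/
def RainbowColorable {V : Type*} (G : SimpleGraph V) (n : ℕ) : Prop :=
  ∃ c : Sym2 V → ℕ, (∀ e ∈ G.edgeSet, c e < n) ∧ RainbowConnectedUnder G c

section RainbowWalks

variable {V α : Type*} {G : SimpleGraph V}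

theorem exists_isPath_nodup_of_walk {c : Sym2 V → α} {u v : V} (p : G.Walk u v)
    (hp : (p.edges.map c).Nodup) : ∃ q : G.Walk u v, q.IsPath ∧ (q.edges.map c).Nodup := by
  classical
  refine ⟨p.bypass, p.bypass_isPath, p.bypass_isPath.isTrail.edges_nodup.map_on ?_⟩
  intro x hx y hy hxy
  exact List.inj_on_of_nodup_map hp (p.edges_bypass_subset_edges hx)
    (p.edges_bypass_subset_edges hy) hxy

theorem rainbowConnectedUnder_of_injective {c : Sym2 V → ℕ} (hG : G.Preconnected)
    (hc : c.Injective) : RainbowConnectedUnder G c := by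
  intro u v
  obtain ⟨p, hp⟩ := (hG u v).exists_isPath
  exact ⟨p, hp, hp.isTrail.edges_nodup.map hc⟩

theorem exists_rainbowColorable_of_preconnected [Finite V] (hG : G.Preconnected) :
    ∃ n, RainbowColorable G n := by
  obtain ⟨n, ⟨index⟩⟩ := Finite.exists_equiv_fin (Sym2 V)
  exact ⟨n, fun e => index e, fun e _ => (index e).isLt,
    rainbowConnectedUnder_of_injective hG (Fin.val_injective.comp index.injective)⟩

theorem rainbowColorable_rc (hG : ∃ n, RainbowColorable G n) : RainbowColorable G (rc G) :=
  Nat.sInf_mem hG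

end RainbowWalks

section Attachments

/-- `v` is attached to `D` with colours `l` if some walk from `v` to a vertex of `D` has the list
`l` of edge colours, read from `v`. The walk may be trivial and may pass through `D`. -/
def HasAttachment {V α : Type*} (G : SimpleGraph V) (c : Sym2 V → α) (D : Set V) (v : V)
    (l : List α) : Prop :=
  ∃ a ∈ D, ∃ p : G.Walk v a, p.edges.map c = l

/-- Any two vertices of `D` are joined by a rainbow walk of `G` with colours `< n`. The walk need
not stay in `D`; by `exists_isPath_nodup_of_walk`, walks serve as well as paths here. -/
def RainbowConnectedWithin {V : Type*} (G : SimpleGraph V) (c : Sym2 V → ℕ) (D : Set V) (n : ℕ) :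
    Prop :=
  ∀ a ∈ D, ∀ b ∈ D, ∃ p : G.Walk a b, (p.edges.map c).Nodup ∧ ∀ i ∈ p.edges.map c, i < n

/-- `v` has two attachments to `D`, the first of them by at most one edge, whose colours are `≥ n`
and pairwise distinct, also across the two. For `v ∈ D` both may be empty. -/
def TwoWayAttached {V : Type*} (G : SimpleGraph V) (c : Sym2 V → ℕ) (D : Set V) (n : ℕ) (v : V) :
    Prop :=
  ∃ l l', HasAttachment G c D v l ∧ HasAttachment G c D v l' ∧ l.length ≤ 1 ∧ (l ++ l').Nodup ∧
    ∀ i ∈ l ++ l', n ≤ i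

variable {V : Type*} {G : SimpleGraph V} {D : Set V} {u v w : V}

theorem hasAttachment_nil_of_mem {α : Type*} (c : Sym2 V → α) (hv : v ∈ D) :
    HasAttachment G c D v [] :=
  ⟨v, hv, .nil, rfl⟩

theorem HasAttachment.cons {α : Type*} {c : Sym2 V → α} {l : List α} (hvw : G.Adj v w)
    (hw : HasAttachment G c D w l) : HasAttachment G c D v (c s(v, w) :: l) := by
  obtain ⟨a, ha, p, rfl⟩ := hw
  exact ⟨a, ha, .cons hvw p, rfl⟩

theorem hasAttachment_singleton_of_adj {α : Type*} (c : Sym2 V → α) (hvw : G.Adj v w)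
    (hw : w ∈ D) : HasAttachment G c D v [c s(v, w)] :=
  (hasAttachment_nil_of_mem c hw).cons hvw

variable {c : Sym2 V → ℕ} {n : ℕ}

theorem HasAttachment.exists_rainbow_path {l l' : List ℕ}
    (hD : RainbowConnectedWithin G c D n)
    (hu : HasAttachment G c D u l) (hv : HasAttachment G c D v l') (hnodup : (l ++ l').Nodup)
    (hle : ∀ i ∈ l ++ l', n ≤ i) : ∃ p : G.Walk u v, p.IsPath ∧ (p.edges.map c).Nodup := by
  obtain ⟨a, ha, p, rfl⟩ := hu
  obtain ⟨b, hb, q, rfl⟩ := hv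
  obtain ⟨r, hr, hlt⟩ := hD a ha b hb
  have hdisj : (p.edges.map c ++ q.edges.map c).Disjoint (r.edges.map c) :=
    fun i hi hi' => (hle i hi).not_gt (hlt i hi')
  refine exists_isPath_nodup_of_walk (p.append (r.append q.reverse)) ?_
  have hperm : ((p.append (r.append q.reverse)).edges.map c).Perm
      ((p.edges.map c ++ q.edges.map c) ++ r.edges.map c) := by
    simp only [Walk.edges_append, Walk.edges_reverse, List.map_append, List.map_reverse,
      List.append_assoc]
    exact .append_left _ (List.perm_append_comm.trans (.append_right _ (List.reverse_perm _)))
  exact hperm.nodup_iff.mpr (hnodup.append hr hdisj)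

theorem twoWayAttached_of_mem (hv : v ∈ D) : TwoWayAttached G c D n v :=
  ⟨[], [], hasAttachment_nil_of_mem c hv, hasAttachment_nil_of_mem c hv, by simp⟩

-- As the first attachments have at most one edge, those of `u` and `v` have either disjoint colours
-- or the same ones; in the latter case `v` switches to its second attachment.
theorem rainbowConnectedUnder_of_twoWayAttached (hD : RainbowConnectedWithin G c D n)
    (hatt : ∀ v, TwoWayAttached G c D n v) : RainbowConnectedUnder G c := by
  intro u v
  obtain ⟨l, l', hu, -, hlen, -, hle⟩ := hatt u
  obtain ⟨m, m', hv, hv', hlen', hnodup', hle'⟩ := hatt v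
  by_cases hlm : l = m
  · subst hlm
    exact hu.exists_rainbow_path hD hv' hnodup' hle'
  · have hdisj : (l ++ m).Nodup :=
      match l, m with
      | [], _ => hnodup'.of_append_left
      | [_], [] => List.nodup_singleton _
      | [_], [_] => by simpa using hlm
    have hle_append : ∀ i ∈ l ++ m, n ≤ i := List.forall_mem_append.mpr
      ⟨(List.forall_mem_append.mp hle).1, (List.forall_mem_append.mp hle').1⟩
    exact hu.exists_rainbow_path hD hv hdisj hle_append

end Attachments

section Existence

variable {V : Type*} {G : SimpleGraph V} {D : Set V} {v w : V}

theorem exists_adj_ne_of_deg_ne_one (hv : deg G v ≠ 1) (hvw : G.Adj v w) :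
    ∃ a, G.Adj v a ∧ a ≠ w := by
  contrapose! hv
  exact Set.ncard_eq_one.mpr ⟨w, Set.eq_singleton_iff_unique_mem.mpr ⟨hvw, hv⟩⟩

theorem IsDominatingSet.exists_adj_mem (hD : IsDominatingSet G D) (hv : v ∉ D) :
    ∃ a ∈ D, G.Adj v a := by
  obtain ⟨a, ha, hav⟩ := (hD v).resolve_left hv
  exact ⟨a, ha, hav.symm⟩

theorem exists_isIndepSet_subset_dominating (G : SimpleGraph V) (S : Set V) :
    ∃ X ⊆ S, G.IsIndepSet X ∧ ∀ v ∈ S, v ∉ X → ∃ x ∈ X, G.Adj v x := by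
  obtain ⟨X, hX⟩ := zorn_subset {X | X ⊆ S ∧ G.IsIndepSet X} fun C hC hchain =>
    ⟨⋃₀ C, ⟨Set.sUnion_subset fun Y hY => (hC hY).1,
      hchain.pairwise_sUnion.mpr fun Y hY => (hC hY).2⟩, fun Y hY => Set.subset_sUnion_of_mem hY⟩
  refine ⟨X, hX.prop.1, hX.prop.2, fun v hvS hvX => ?_⟩
  by_contra! hv
  have hinsert : G.IsIndepSet (insert v X) :=
    hX.prop.2.insert fun x hx _ => ⟨hv x hx, fun hxv => hv x hx hxv.symm⟩
  exact hvX (hX.le_of_ge ⟨Set.insert_subset hvS hX.prop.1, hinsert⟩ (Set.subset_insert v X)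
    (Set.mem_insert v X))

end Existence

section TwoWayColoring

open Classical in
/-- The colouring of `G` built from a colouring `c₀` of `G[D]` with colours `< n`: `n` on the edges
from `x ∈ X` to `foot x`, `n + 1` on the remaining edges between `D` and its complement, and
`n + 2` on the edges outside `D`. -/
noncomputable def twoWayColoring {V : Type*} {D : Set V} (c₀ : Sym2 D → ℕ) (n : ℕ) (X : Set V)
    (foot : V → V) : Sym2 V → ℕ :=
  Function.extend (Sym2.map (↑)) c₀ fun e =>
    if ∃ x ∈ X, s(x, foot x) = e then n else if ∃ a ∈ e, a ∈ D then n + 1 else n + 2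

variable {V : Type*} {G : SimpleGraph V} {D X : Set V} {c₀ : Sym2 D → ℕ} {n : ℕ} {foot : V → V}
  {v w : V}

theorem twoWayColoring_map_val (e : Sym2 D) :
    twoWayColoring c₀ n X foot (e.map (↑)) = c₀ e :=
  (Sym2.map.injective Subtype.val_injective).extend_apply _ _ e

open Classical in
theorem twoWayColoring_of_notMem (hfoot : MapsTo foot X D) (hv : v ∉ D) :
    twoWayColoring c₀ n X foot s(v, w) =
      if v ∈ X ∧ w = foot v then n else if w ∈ D then n + 1 else n + 2 := by
  have hout : ¬ ∃ e : Sym2 D, e.map (↑) = s(v, w) := by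
    rintro ⟨e, he⟩
    obtain ⟨a, -, rfl⟩ := Sym2.mem_map.mp (he ▸ Sym2.mem_mk_left v w)
    exact hv a.2
  have hleg : (∃ x ∈ X, s(x, foot x) = s(v, w)) ↔ v ∈ X ∧ w = foot v := by
    refine ⟨?_, fun ⟨hvX, hw⟩ => ⟨v, hvX, hw ▸ rfl⟩⟩
    rintro ⟨x, hx, hxvw⟩
    obtain ⟨rfl, rfl⟩ | ⟨rfl, rfl⟩ := Sym2.eq_iff.mp hxvw
    · exact ⟨hx, rfl⟩
    · exact absurd (hfoot hx) hv
  simp only [twoWayColoring, Function.extend_apply' _ _ _ hout, hleg, Sym2.mem_iff,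
    exists_eq_or_imp, exists_eq_left, hv, false_or]

theorem twoWayColoring_lt (hc₀ : ∀ e ∈ (G.induce D).edgeSet, c₀ e < n) {e : Sym2 V}
    (he : e ∈ G.edgeSet) : twoWayColoring c₀ n X foot e < n + 3 := by
  by_cases hin : ∃ e' : Sym2 D, e'.map (↑) = e
  · obtain ⟨e', rfl⟩ := hin
    have he' : e' ∈ (G.induce D).edgeSet := by
      induction e' with
      | _ x y => simpa using he
    have := hc₀ e' he'
    rw [twoWayColoring_map_val]
    lia
  · simp only [twoWayColoring, Function.extend_apply' _ _ _ hin]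
    split_ifs <;> lia

theorem rainbowConnectedWithin_twoWayColoring (hc₀ : ∀ e ∈ (G.induce D).edgeSet, c₀ e < n)
    (hrainbow : RainbowConnectedUnder (G.induce D) c₀) :
    RainbowConnectedWithin G (twoWayColoring c₀ n X foot) D n := by
  intro a ha b hb
  obtain ⟨p, -, hp⟩ := hrainbow ⟨a, ha⟩ ⟨b, hb⟩
  let q : G.Walk a b := p.map (Embedding.induce D).toHom
  have hcolors : q.edges.map (twoWayColoring c₀ n X foot) = p.edges.map c₀ := calc
    _ = (p.edges.map (Sym2.map (↑))).map (twoWayColoring c₀ n X foot) :=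
      congrArg (List.map _) (Walk.edges_map _ p)
    _ = p.edges.map c₀ := by
      rw [List.map_map]
      exact List.map_congr_left fun e _ => twoWayColoring_map_val e
  refine ⟨q, hcolors ▸ hp, hcolors ▸ ?_⟩
  exact List.forall_mem_map.mpr fun e he => hc₀ e (p.edges_subset_edgeSet he)

theorem hasAttachment_twoWayColoring_foot (hfoot : MapsTo foot X D) (hv : v ∉ D) (hvX : v ∈ X)
    (hadj : G.Adj v (foot v)) : HasAttachment G (twoWayColoring c₀ n X foot) D v [n] := by
  have hcolor : twoWayColoring c₀ n X foot s(v, foot v) = n := by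
    rw [twoWayColoring_of_notMem hfoot hv, if_pos ⟨hvX, rfl⟩]
  simpa only [hcolor] using
    hasAttachment_singleton_of_adj (twoWayColoring c₀ n X foot) hadj (hfoot hvX)

theorem hasAttachment_twoWayColoring_of_ne_foot (hfoot : MapsTo foot X D) (hv : v ∉ D) (hw : w ∈ D)
    (hvw : G.Adj v w) (hne : ¬(v ∈ X ∧ w = foot v)) :
    HasAttachment G (twoWayColoring c₀ n X foot) D v [n + 1] := by
  have hcolor : twoWayColoring c₀ n X foot s(v, w) = n + 1 := by
    rw [twoWayColoring_of_notMem hfoot hv, if_neg hne, if_pos hw]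
  simpa only [hcolor] using hasAttachment_singleton_of_adj (twoWayColoring c₀ n X foot) hvw hw

theorem HasAttachment.cons_twoWayColoring {l : List ℕ} (hfoot : MapsTo foot X D) (hv : v ∉ D)
    (hw : w ∉ D) (hvw : G.Adj v w) (hattach : HasAttachment G (twoWayColoring c₀ n X foot) D w l) :
    HasAttachment G (twoWayColoring c₀ n X foot) D v ((n + 2) :: l) := by
  have hne : ¬(v ∈ X ∧ w = foot v) := fun ⟨hvX, hwv⟩ => hw (hwv ▸ hfoot hvX)
  have hcolor : twoWayColoring c₀ n X foot s(v, w) = n + 2 := by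
    rw [twoWayColoring_of_notMem hfoot hv, if_neg hne, if_neg hw]
  simpa only [hcolor] using hattach.cons hvw

theorem twoWayAttached_twoWayColoring_of_mem (hfoot : ∀ x ∉ D, foot x ∈ D ∧ G.Adj x (foot x))
    (hXD : X ⊆ Dᶜ) (hX : G.IsIndepSet X) (hvX : v ∈ X) (hpen : deg G v ≠ 1) :
    TwoWayAttached G (twoWayColoring c₀ n X foot) D n v := by
  have hv : v ∉ D := hXD hvX
  have hmaps : MapsTo foot X D := fun x hx => (hfoot x (hXD hx)).1
  have hfirst := hasAttachment_twoWayColoring_foot (c₀ := c₀) (n := n) hmaps hv hvX (hfoot v hv).2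
  by_cases hout : ∃ w ∉ D, G.Adj v w
  · obtain ⟨w, hw, hvw⟩ := hout
    have hwX : w ∉ X := fun hwX => hX hvX hwX hvw.ne hvw
    have hsecond := hasAttachment_twoWayColoring_of_ne_foot (c₀ := c₀) (n := n) hmaps hw
      (hfoot w hw).1 (hfoot w hw).2 fun h => hwX h.1
    exact ⟨[n], [n + 2, n + 1], hfirst, hsecond.cons_twoWayColoring hmaps hv hw hvw, by simp⟩
  · push Not at hout
    obtain ⟨a, hva, hne⟩ := exists_adj_ne_of_deg_ne_one hpen (hfoot v hv).2
    have ha : a ∈ D := of_not_not fun ha => hout a ha hva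
    exact ⟨[n], [n + 1], hfirst,
      hasAttachment_twoWayColoring_of_ne_foot hmaps hv ha hva fun h => hne h.2, by simp⟩

theorem twoWayAttached_twoWayColoring_of_adj (hfoot : ∀ x ∉ D, foot x ∈ D ∧ G.Adj x (foot x))
    (hXD : X ⊆ Dᶜ) (hv : v ∉ D) (hvX : v ∉ X) (hwX : w ∈ X) (hvw : G.Adj v w) :
    TwoWayAttached G (twoWayColoring c₀ n X foot) D n v := by
  have hmaps : MapsTo foot X D := fun x hx => (hfoot x (hXD hx)).1
  have hw : w ∉ D := hXD hwX
  have hfirst := hasAttachment_twoWayColoring_of_ne_foot (c₀ := c₀) (n := n) hmaps hv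
    (hfoot v hv).1 (hfoot v hv).2 fun h => hvX h.1
  have hsecond := hasAttachment_twoWayColoring_foot (c₀ := c₀) (n := n) hmaps hw hwX
    (hfoot w hw).2
  exact ⟨[n + 1], [n + 2, n], hfirst, hsecond.cons_twoWayColoring hmaps hv hw hvw, by simp⟩

theorem RainbowColorable.of_induce (hdom : IsDominatingSet G D)
    (hpen : ∀ v, deg G v = 1 → v ∈ D) (hcol : RainbowColorable (G.induce D) n) :
    RainbowColorable G (n + 3) := by
  obtain ⟨c₀, hc₀, hrainbow⟩ := hcol
  obtain ⟨X, hXD, hX, hXmax⟩ := exists_isIndepSet_subset_dominating G Dᶜ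
  have hex : ∀ v ∉ D, ∃ a, a ∈ D ∧ G.Adj v a := fun v hv => hdom.exists_adj_mem hv
  choose! foot hfoot using hex
  refine ⟨twoWayColoring c₀ n X foot, fun e he => twoWayColoring_lt hc₀ he,
    rainbowConnectedUnder_of_twoWayAttached (rainbowConnectedWithin_twoWayColoring hc₀ hrainbow)
      fun v => ?_⟩
  by_cases hv : v ∈ D
  · exact twoWayAttached_of_mem hv
  by_cases hvX : v ∈ X
  · exact twoWayAttached_twoWayColoring_of_mem hfoot hXD hX hvX fun hdeg => hv (hpen v hdeg)
  · obtain ⟨w, hwX, hvw⟩ := hXmax v hv hvX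
    exact twoWayAttached_twoWayColoring_of_adj hfoot hXD hv hvX hwX hvw

end TwoWayColoring

theorem stmt_0_general {V : Type*} (G : SimpleGraph V) (D : Set V) (hdom : IsDominatingSet G D)
    (hcol : ∃ n, RainbowColorable (G.induce D) n) (hpen : ∀ v : V, deg G v = 1 → v ∈ D) :
    rc G ≤ rc (G.induce D) + 3 :=
  Nat.sInf_le (RainbowColorable.of_induce hdom hpen (rainbowColorable_rc hcol))

/-- If `D` is a connected two-way dominating set in a finite connected
graph `G`, then `rc(G) ≤ rc(G[D]) + 3`. -/
theorem stmt_0 {V : Type*} [Fintype V] (G : SimpleGraph V) (hG : G.Connected)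
    (D : Set V) (hdom : IsDominatingSet G D) (hconn : (G.induce D).Connected)
    (hpen : ∀ v : V, deg G v = 1 → v ∈ D) :
    rc G ≤ rc (G.induce D) + 3 :=
  stmt_0_general G D hdom (exists_rainbowColorable_of_preconnected hconn.preconnected) hpen
end

section
/- Let G be a finite connected simple graph with minimum degree δ(G) ≥ 2. Then rc(G) ≤ γ_c(G) + 2, where γ_c(G) is the connected domination number of G. -/
open SimpleGraph Set

/-!
A rainbow colouring of `G[D]`, where `D` dominates `G` and every vertex outside `D` has two
neighbours, extends to `G` with three new colours `a`, `b`, `e`. Edges outside `D` receive `e`.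
Each vertex `v ∉ D` with a neighbour outside `D` is put on one of two sides, so that some neighbour
of `v` outside `D` is on the other side; all edges from `v` to `D` receive `a` on one side, `b` on
the other. If all neighbours of `v` lie in `D`, one of the edges at `v` receives `a`, all others
receive `b`. So `v` reaches `D` both along an edge of one colour from `{a, b}` and along a rainbow
walk with the other of these two colours and possibly `e`. Any two vertices then have rainbow walks
into `D` with disjoint sets of colours, which are linked up inside `D`. A spanning tree of `G[D]`
with distinctly coloured edges shows that `|D| - 1` colours suffice there.
-/

section Palette

variable {V W α : Type*} {G : SimpleGraph V} {H : SimpleGraph W} {c : Sym2 V → α}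
  {R S T : Set α} {D : Set V} {u v w : V}

/-- The walk `p` is rainbow under the edge colouring `c`, and all its colours belong to the
palette `S`. The palette is only an upper bound: not all of its colours need to occur. -/
def IsRainbowIn (c : Sym2 V → α) (S : Set α) (p : G.Walk u v) : Prop :=
  (p.edges.map c).Nodup ∧ ∀ x ∈ p.edges.map c, x ∈ S

namespace IsRainbowIn

theorem nil : IsRainbowIn c S (.nil : G.Walk u u) := by
  simp [IsRainbowIn]

theorem mono {p : G.Walk u v} (hp : IsRainbowIn c S p) (hST : S ⊆ T) : IsRainbowIn c T p :=
  ⟨hp.1, fun x hx => hST (hp.2 x hx)⟩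

theorem reverse {p : G.Walk u v} (hp : IsRainbowIn c S p) : IsRainbowIn c S p.reverse := by
  simpa [IsRainbowIn] using hp

theorem append {p : G.Walk u v} {q : G.Walk v w} (hp : IsRainbowIn c S p)
    (hq : IsRainbowIn c T q) (hST : Disjoint S T) : IsRainbowIn c (S ∪ T) (p.append q) := by
  simp only [IsRainbowIn, Walk.edges_append, List.map_append, List.mem_append]
  refine ⟨hp.1.append hq.1 fun x hxp hxq => hST.notMem_of_mem_left (hp.2 x hxp) (hq.2 x hxq), ?_⟩
  exact fun x hx => hx.imp (hp.2 x) (hq.2 x)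

theorem cons {p : G.Walk v w} (hp : IsRainbowIn c S p) (h : G.Adj u v) (hS : c s(u, v) ∉ S) :
    IsRainbowIn c (insert (c s(u, v)) S) (.cons h p) := by
  simp only [IsRainbowIn, Walk.edges_cons, List.map_cons, List.nodup_cons, List.mem_cons]
  exact ⟨⟨fun hx => hS (hp.2 _ hx), hp.1⟩, fun x hx => hx.imp id (hp.2 x)⟩

theorem map (f : H →g G) {a b : W} {p : H.Walk a b} (hp : IsRainbowIn (c ∘ Sym2.map f) S p) :
    IsRainbowIn c S (p.map f) := by
  simpa only [IsRainbowIn, Walk.edges_map, List.map_map] using hp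

theorem exists_isPath {p : G.Walk u v} (hp : IsRainbowIn c S p) :
    ∃ q : G.Walk u v, q.IsPath ∧ (q.edges.map c).Nodup := by
  classical
  exact ⟨p.bypass, p.bypass_isPath, hp.1.sublist (p.edges_bypass_sublist_edges.map c)⟩

end IsRainbowIn

/-- The vertex `v` is joined to some vertex of `D` by a walk that is rainbow under `c` with all
colours in the palette `S`. -/
def RainbowReaches (G : SimpleGraph V) (c : Sym2 V → α) (D : Set V) (S : Set α) (v : V) : Prop :=
  ∃ d ∈ D, ∃ p : G.Walk v d, IsRainbowIn c S p

namespace RainbowReaches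

theorem of_mem (hv : v ∈ D) : RainbowReaches G c D S v :=
  ⟨v, hv, .nil, .nil⟩

theorem mono (hv : RainbowReaches G c D S v) (hST : S ⊆ T) : RainbowReaches G c D T v :=
  let ⟨d, hd, p, hp⟩ := hv
  ⟨d, hd, p, hp.mono hST⟩

theorem of_adj (hw : RainbowReaches G c D S w) (h : G.Adj v w) (hS : c s(v, w) ∉ S) :
    RainbowReaches G c D (insert (c s(v, w)) S) v :=
  let ⟨d, hd, p, hp⟩ := hw
  ⟨d, hd, .cons h p, hp.cons h hS⟩

theorem of_adj_mem (h : G.Adj v w) (hw : w ∈ D) : RainbowReaches G c D {c s(v, w)} v := by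
  simpa using (of_mem (S := ∅) hw).of_adj h (notMem_empty _)

theorem exists_isPath (hu : RainbowReaches G c D S u) (hv : RainbowReaches G c D T v)
    (hD : ∀ d ∈ D, ∀ d' ∈ D, ∃ q : G.Walk d d', IsRainbowIn c R q)
    (hSR : Disjoint S R) (hST : Disjoint S T) (hRT : Disjoint R T) :
    ∃ p : G.Walk u v, p.IsPath ∧ (p.edges.map c).Nodup := by
  obtain ⟨d, hd, p, hp⟩ := hu
  obtain ⟨d', hd', q, hq⟩ := hv
  obtain ⟨r, hr⟩ := hD d hd d' hd'
  exact ((hp.append hr hSR).append hq.reverse (hST.union_left hRT)).exists_isPath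

end RainbowReaches

end Palette

section Extension

variable {V α : Type*} {G : SimpleGraph V} {D : Set V}

open Classical in
/-- The edge colouring that extends a colouring `c` of the pairs inside `D`, gives the pair of
`v ∉ D` and `d ∈ D` the colour `leg v d`, and gives every pair outside `D` the colour `outer`. -/
noncomputable def extendColoring (c : Sym2 D → α) (leg : V → V → α) (outer : α) : Sym2 V → α :=
  Sym2.lift ⟨fun a b =>
    if ha : a ∈ D then
      if hb : b ∈ D then c s(⟨a, ha⟩, ⟨b, hb⟩) else leg b a
    else if b ∈ D then leg a b else outer, by
    intro a b
    dsimp only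
    split_ifs <;> simp only [Sym2.eq_swap]⟩

section

variable (c : Sym2 D → α) (leg : V → V → α) (outer : α)

theorem extendColoring_comp_map_val :
    extendColoring c leg outer ∘ Sym2.map Subtype.val = c := by
  funext e
  induction e with
  | _ a b => simp [extendColoring]

variable {v w : V}

theorem extendColoring_of_notMem_of_mem (hv : v ∉ D) (hw : w ∈ D) :
    extendColoring c leg outer s(v, w) = leg v w := by
  simp [extendColoring, hv, hw]

theorem extendColoring_of_notMem_of_notMem (hv : v ∉ D) (hw : w ∉ D) :
    extendColoring c leg outer s(v, w) = outer := by
  simp [extendColoring, hv, hw]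

end

theorem extendColoring_lt {c : Sym2 D → ℕ} {leg : V → V → ℕ} {outer n : ℕ}
    (hc : ∀ e ∈ (G.induce D).edgeSet, c e < n) (hleg : ∀ v d, leg v d < n) (houter : outer < n) :
    ∀ e ∈ G.edgeSet, extendColoring c leg outer e < n := by
  intro e he
  induction e with
  | _ a b =>
    simp only [extendColoring, Sym2.lift_mk]
    split_ifs
    · exact hc _ he
    all_goals first | exact hleg _ _ | exact houter

end Extension

section Labelling

variable {V : Type*} (G : SimpleGraph V) {D : Set V}

theorem exists_bool_forall_adj_exists_adj_ne :
    ∃ side : V → Bool, ∀ ⦃v w⦄, G.Adj v w → ∃ u, G.Adj v u ∧ side u ≠ side v := by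
  obtain ⟨F, hFG, hF, hreach⟩ := G.exists_isAcyclic_reachable_eq_le
  let side : F.Coloring Bool := hF.colorable_two.toColoring (by simp)
  refine ⟨side, fun v w hvw => ?_⟩
  have hvw' : F.Reachable v w := hreach ▸ hvw.reachable
  obtain ⟨u, hu⟩ := hvw'.nonempty_neighborSet_left hvw.ne
  exact ⟨u, hFG hu, (side.valid hu).symm⟩

variable {G}

/-- A labelling `g v d` of the edges from `v ∉ D` to `d ∈ D` by two labels, such that every vertex
outside `D` has an edge to `D` with one label, and an edge to `D` with the other label either at
itself or at one of its neighbours outside `D`. Values of `g` off these edges are irrelevant. -/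
def IsLegLabelling (G : SimpleGraph V) (D : Set V) (g : V → V → Bool) : Prop :=
  ∀ v ∉ D, ∃ d ∈ D, G.Adj v d ∧
    ((∃ d' ∈ D, G.Adj v d' ∧ g v d' ≠ g v d) ∨
      ∃ w ∉ D, G.Adj v w ∧ ∃ d' ∈ D, G.Adj w d' ∧ g w d' ≠ g v d)

theorem IsDominatingSet.exists_isLegLabelling (hdom : IsDominatingSet G D)
    (htwo : ∀ v ∉ D, (G.neighborSet v).Nontrivial) :
    ∃ g, IsLegLabelling G D g := by
  classical
  obtain ⟨side, hside⟩ := exists_bool_forall_adj_exists_adj_ne (G.induce Dᶜ).spanningCoe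
  have hnbr (v) (hv : v ∉ D) : ∃ d ∈ D, G.Adj d v := (hdom v).resolve_left hv
  choose! f hfD hf using hnbr
  let g (v d : V) : Bool := if ∃ w ∉ D, G.Adj v w then side v else decide (d = f v)
  have g_eq_side {v w d : V} (hvw : G.Adj v w) (hw : w ∉ D) : g v d = side v :=
    if_pos ⟨w, hw, hvw⟩
  refine ⟨g, fun v hv => ⟨f v, hfD v hv, (hf v hv).symm, ?_⟩⟩
  by_cases houter : ∃ w ∉ D, G.Adj v w
  · obtain ⟨w, hw, hvw⟩ := houter
    obtain ⟨u, hvu, hne⟩ := hside (v := v) (w := w) (by simp [hv, hw, hvw])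
    obtain ⟨hvu, -, hu⟩ : G.Adj v u ∧ v ∉ D ∧ u ∉ D := by simpa using hvu
    refine .inr ⟨u, hu, hvu, f u, hfD u hu, (hf u hu).symm, ?_⟩
    rwa [g_eq_side hvu.symm hv, g_eq_side hvu hu]
  · obtain ⟨d, hvd, hne⟩ := (htwo v hv).exists_ne (f v)
    have hd : d ∈ D := by_contra fun hd => houter ⟨d, hd, hvd⟩
    exact .inl ⟨d, hd, hvd, by simp [g, houter, hne]⟩

end Labelling

section Colorable

variable {V : Type*} {G : SimpleGraph V} {D : Set V}

theorem RainbowColorable.rc_le {n : ℕ} (h : RainbowColorable G n) : rc G ≤ n :=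
  Nat.sInf_le h

theorem rainbowConnectedUnder_of_injOn {T : SimpleGraph V} (hTG : T ≤ G) (hT : T.Connected)
    {c : Sym2 V → ℕ} (hc : InjOn c T.edgeSet) : RainbowConnectedUnder G c := by
  intro u v
  obtain ⟨p, hp⟩ := hT.exists_isPath u v
  refine ⟨p.mapLe hTG, hp.mapLe hTG, ?_⟩
  rw [Walk.edges_mapLe_eq_edges]
  exact hp.isTrail.edges_nodup.map_on fun e he e' he' =>
    hc (p.edges_subset_edgeSet he) (p.edges_subset_edgeSet he')

theorem rainbowColorable_of_connected [Finite V] (hG : G.Connected) :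
    RainbowColorable G (Nat.card V - 1) := by
  obtain ⟨T, hTG, hT⟩ := hG.exists_isTree_le
  have hcard : Nat.card T.edgeSet + 1 = Nat.card V := (isTree_iff_connected_and_card.mp hT).2
  cases subsingleton_or_nontrivial V
  · have hGbot : G = ⊥ := Subsingleton.elim _ _
    exact ⟨0, by simp [hGbot], rainbowConnectedUnder_of_injOn hTG hT.connected
      (by simp [Subsingleton.elim T ⊥])⟩
  · have : Nonempty (Fin (Nat.card V - 1)) :=
      ⟨⟨0, Nat.sub_pos_of_lt Finite.one_lt_card⟩⟩
    have hle : T.edgeSet.encard ≤ (univ : Set (Fin (Nat.card V - 1))).encard := by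
      rw [← T.edgeSet.toFinite.cast_ncard_eq, encard_univ, ENat.card_eq_coe_natCard, Nat.card_fin]
      exact_mod_cast (Nat.eq_sub_of_add_eq hcard).le
    obtain ⟨c, -, hc⟩ := T.edgeSet.toFinite.exists_injOn_of_encard_le hle
    exact ⟨fun e => c e, fun e _ => (c e).isLt,
      rainbowConnectedUnder_of_injOn hTG hT.connected fun e he e' he' h =>
        hc he he' (Fin.ext h)⟩

theorem RainbowConnectedUnder.exists_isRainbowIn_of_induce {c : Sym2 V → ℕ} {S : Set ℕ}
    (hc : RainbowConnectedUnder (G.induce D) (c ∘ Sym2.map Subtype.val))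
    (hS : ∀ e ∈ (G.induce D).edgeSet, c (e.map Subtype.val) ∈ S) :
    ∀ d ∈ D, ∀ d' ∈ D, ∃ q : G.Walk d d', IsRainbowIn c S q := by
  intro d hd d' hd'
  obtain ⟨p, -, hp⟩ := hc ⟨d, hd⟩ ⟨d', hd'⟩
  have hpS : IsRainbowIn (c ∘ Sym2.map Subtype.val) S p :=
    ⟨hp, List.forall_mem_map.mpr fun e he => hS e (p.edges_subset_edgeSet he)⟩
  exact ⟨_, IsRainbowIn.map (Embedding.induce D).toHom hpS⟩

theorem IsLegLabelling.exists_rainbowReaches {g : V → V → Bool} (hg : IsLegLabelling G D g)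
    (c : Sym2 D → ℕ) (k : ℕ) (v : V) :
    let c' := extendColoring c (fun w d => k + (g w d).toNat) (k + 2)
    ∃ b : Bool, RainbowReaches G c' D {k + b.toNat} v ∧
      RainbowReaches G c' D {k + 2, k + (!b).toNat} v := by
  intro c'
  by_cases hv : v ∈ D
  · exact ⟨true, .of_mem hv, .of_mem hv⟩
  have leg {v d : V} (hv : v ∉ D) (hd : d ∈ D) (hvd : G.Adj v d) :
      RainbowReaches G c' D {k + (g v d).toNat} v := by
    simpa only [c', extendColoring_of_notMem_of_mem c _ _ hv hd] using
      RainbowReaches.of_adj_mem (c := c') hvd hd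
  obtain ⟨d, hd, hvd, ⟨d', hd', hvd', hne⟩ | ⟨w, hw, hvw, d', hd', hwd', hne⟩⟩ := hg v hv <;>
    refine ⟨g v d, leg hv hd hvd, ?_⟩ <;> rw [← Bool.eq_not.mpr hne]
  · exact (leg hv hd' hvd').mono (subset_insert _ _)
  · have houter : c' s(v, w) = k + 2 := extendColoring_of_notMem_of_notMem c _ _ hv hw
    rw [← houter]
    refine (leg hw hd' hwd').of_adj hvw ?_
    have := (g w d').toNat_lt
    simp only [houter, mem_singleton_iff]
    omega

theorem RainbowColorable.of_induce_s1 {k : ℕ} (hk : RainbowColorable (G.induce D) k)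
    (hdom : IsDominatingSet G D) (htwo : ∀ v ∉ D, (G.neighborSet v).Nontrivial) :
    RainbowColorable G (k + 3) := by
  obtain ⟨c, hck, hc⟩ := hk
  obtain ⟨g, hg⟩ := hdom.exists_isLegLabelling htwo
  let c' := extendColoring c (fun v d => k + (g v d).toNat) (k + 2)
  have hrestrict : c' ∘ Sym2.map Subtype.val = c := extendColoring_comp_map_val c _ _
  have hcore : ∀ d ∈ D, ∀ d' ∈ D, ∃ q : G.Walk d d', IsRainbowIn c' (Iio k) q :=
    RainbowConnectedUnder.exists_isRainbowIn_of_induce (hrestrict ▸ hc) fun e he =>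
      (congrFun hrestrict e).trans_lt (hck e he)
  refine ⟨c', extendColoring_lt (fun e he => (hck e he).trans (by omega))
    (fun v d => by have := (g v d).toNat_lt; omega) (by omega), fun u v => ?_⟩
  obtain ⟨b, hu, -⟩ := hg.exists_rainbowReaches c k u
  obtain ⟨b', hv, hv'⟩ := hg.exists_rainbowReaches c k v
  by_cases hb : b = b'
  · subst hb
    refine hu.exists_isPath hv' hcore ?_ ?_ ?_ <;> cases b <;> simp
  · refine hu.exists_isPath hv hcore ?_ ?_ ?_ <;> cases b <;> cases b' <;> simp_all

end Colorable

theorem exists_isDominatingSet_ncard_eq_connDomNum {V : Type*} {G : SimpleGraph V}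
    (hG : G.Connected) :
    ∃ D : Set V, D.ncard = connDomNum G ∧ IsDominatingSet G D ∧ (G.induce D).Connected :=
  Nat.sInf_mem (s := {n | ∃ D : Set V, D.ncard = n ∧ IsDominatingSet G D ∧
    (G.induce D).Connected})
    ⟨_, univ, rfl, fun v => .inl (mem_univ v), (induceUnivIso G).connected_iff.mpr hG⟩

theorem stmt_1_general {V : Type*} {G : SimpleGraph V} {D : Set V} (hfin : D.Finite)
    (hdom : IsDominatingSet G D) (hconn : (G.induce D).Connected)
    (htwo : ∀ v ∉ D, (G.neighborSet v).Nontrivial) :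
    rc G ≤ D.ncard + 2 := by
  have : Finite D := hfin
  have : Nonempty D := hconn.nonempty
  have hcard : Nat.card D - 1 + 3 = D.ncard + 2 := by
    have : 0 < Nat.card D := Nat.card_pos
    rw [← Nat.card_coe_set_eq]
    omega
  exact hcard ▸ ((rainbowColorable_of_connected hconn).of_induce_s1 hdom htwo).rc_le

/-- For every finite connected graph `G` with minimum degree at least 2,
`rc(G) ≤ γ_c(G) + 2`. -/
theorem stmt_1 {V : Type*} [Fintype V] (G : SimpleGraph V) (hG : G.Connected)
    (hδ : ∀ v : V, 2 ≤ deg G v) :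
    rc G ≤ connDomNum G + 2 := by
  obtain ⟨D, hD, hdom, hconn⟩ := exists_isDominatingSet_ncard_eq_connDomNum hG
  exact hD ▸ stmt_1_general D.toFinite hdom hconn fun v _ =>
    (one_lt_ncard_iff_nontrivial_and_finite.mp (hδ v)).1
end

section
/- Let G be a finite connected simple chain graph with minimum degree δ(G) ≥ 2. Then diam(G) ≤ rc(G) ≤ 4. -/
open SimpleGraph Set

/-!
In a finite chain graph both sides have nested neighbourhoods, so the smallest neighbourhood of each
side is common to that whole side. With minimum degree two this gives hubs `b₁ ≠ b₂` adjacent to all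
of `A` and hubs `a₁ ≠ a₂` adjacent to all of `B`. Label `a₁, b₁` by `1`, `a₂, b₂` by `3` and all
other vertices by `0` in `ℤ/4`, and colour every edge by the sum of the labels of its ends. Two
vertices `u, v` of `A` with different labels are joined by the rainbow path `u b₁ v`; two unlabelled
ones by `u b₁ a₁ b₂ v`, with colours `1, 2, 0, 3`; an unlabelled `u ∈ A` and an unlabelled `v ∈ B`
by `u b₁ a₂ v`, with colours `1, 0, 3`; a hub is adjacent to the whole opposite side.
-/

section Rainbow

variable {V : Type*} {G : SimpleGraph V} {c : Sym2 V → ℕ} {u v : V} {n : ℕ}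

/-- The vertices `u` and `v` are joined by a rainbow path of `G`, so that
`RainbowConnectedUnder G c` says that all pairs are joined in this sense. -/
def RainbowJoined (G : SimpleGraph V) (c : Sym2 V → ℕ) (u v : V) : Prop :=
  ∃ p : G.Walk u v, p.IsPath ∧ (p.edges.map c).Nodup

lemma RainbowJoined.symm (h : RainbowJoined G c u v) : RainbowJoined G c v u := by
  obtain ⟨p, hp, hc⟩ := h
  exact ⟨p.reverse, hp.reverse, by simpa only [Walk.edges_reverse, List.map_reverse,
    List.nodup_reverse] using hc⟩

lemma RainbowJoined.of_walk (p : G.Walk u v) (hp : (p.edges.map c).Nodup) :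
    RainbowJoined G c u v := by
  classical
  exact ⟨p.bypass, p.bypass_isPath, hp.sublist (p.edges_bypass_sublist_edges.map c)⟩

lemma RainbowJoined.refl (v : V) : RainbowJoined G c v v :=
  .of_walk .nil (by simp)

lemma RainbowJoined.of_adj (h : G.Adj u v) : RainbowJoined G c u v :=
  .of_walk h.toWalk (by simp)

lemma length_le_of_nodup_map_edges (p : G.Walk u v) (hc : ∀ e ∈ G.edgeSet, c e < n)
    (hp : (p.edges.map c).Nodup) : p.length ≤ n := by
  have colours_subset : p.edges.map c ⊆ List.range n := by
    intro k hk
    obtain ⟨e, he, rfl⟩ := List.mem_map.1 hk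
    exact List.mem_range.2 (hc e (p.edges_subset_edgeSet he))
  simpa using (hp.subperm colours_subset).length_le

lemma RainbowConnectedUnder.graphDiam_le (h : RainbowConnectedUnder G c)
    (hc : ∀ e ∈ G.edgeSet, c e < n) : graphDiam G ≤ n := by
  refine csSup_le' ?_
  rintro _ ⟨⟨u, v⟩, rfl⟩
  obtain ⟨p, -, hp⟩ := h u v
  exact (dist_le p).trans (length_le_of_nodup_map_edges p hc hp)

lemma RainbowConnectedUnder.rc_le (h : RainbowConnectedUnder G c)
    (hc : ∀ e ∈ G.edgeSet, c e < n) : rc G ≤ n :=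
  Nat.sInf_le ⟨c, hc, h⟩

lemma RainbowConnectedUnder.graphDiam_le_rc (h : RainbowConnectedUnder G c)
    (hc : ∀ e ∈ G.edgeSet, c e < n) : graphDiam G ≤ rc G := by
  obtain ⟨_, hc', h'⟩ := Nat.sInf_mem (s := {n | ∃ c : Sym2 V → ℕ,
    (∀ e ∈ G.edgeSet, c e < n) ∧ RainbowConnectedUnder G c}) ⟨n, c, hc, h⟩
  exact h'.graphDiam_le hc'

end Rainbow

section LabelSum

variable {V : Type*} {G : SimpleGraph V} {n : ℕ} {f : V → ZMod n} {u v w : V}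

/-- The edge colouring induced by a vertex labelling in `ℤ/n`: an edge receives the sum of the
labels of its ends, encoded by its least nonnegative representative. -/
def labelSumColouring (f : V → ZMod n) (e : Sym2 V) : ℕ :=
  (e.lift ⟨fun u v => f u + f v, fun _ _ => add_comm _ _⟩).val

lemma labelSumColouring_mk (f : V → ZMod n) (u v : V) :
    labelSumColouring f s(u, v) = (f u + f v).val := rfl

lemma labelSumColouring_lt [NeZero n] (f : V → ZMod n) (e : Sym2 V) : labelSumColouring f e < n :=
  ZMod.val_lt _

lemma RainbowJoined.of_adj_adj_of_label_ne [NeZero n] (huw : G.Adj u w) (hwv : G.Adj w v)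
    (hne : f u ≠ f v) : RainbowJoined G (labelSumColouring f) u v := by
  refine .of_walk (.cons huw hwv.toWalk) ?_
  simpa [labelSumColouring_mk, add_comm (f w), (ZMod.val_injective n).eq_iff] using hne

end LabelSum

section HubPair

variable {V : Type*} {G : SimpleGraph V} {A B : Set V} {a₁ a₂ b₁ b₂ u v w₁ w₂ : V}

/-- A hub pair of `S` in `T`: two distinct vertices of `T`, each adjacent to all vertices of `S`. -/
structure IsHubPair (G : SimpleGraph V) (S T : Set V) (w₁ w₂ : V) : Prop where
  mem_left : w₁ ∈ T
  mem_right : w₂ ∈ T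
  ne : w₁ ≠ w₂
  adj_left : ∀ v ∈ S, G.Adj v w₁
  adj_right : ∀ v ∈ S, G.Adj v w₂

variable [DecidableEq V]

/-- The labelling in `ℤ/4` of one pair of hubs: the hubs get `1` and `3`, all other vertices `0`.
The values are chosen so that `0 + 1`, `1 + 1`, `1 + 3` and `3 + 0` are distinct. -/
def pairLabel (w₁ w₂ v : V) : ZMod 4 :=
  if v = w₁ then 1 else if v = w₂ then 3 else 0

lemma pairLabel_left (w₁ w₂ : V) : pairLabel w₁ w₂ w₁ = 1 :=
  if_pos rfl

lemma pairLabel_right (h : w₁ ≠ w₂) : pairLabel w₁ w₂ w₂ = 3 := by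
  simp [pairLabel, h.symm]

lemma pairLabel_eq_zero (h₁ : v ≠ w₁) (h₂ : v ≠ w₂) : pairLabel w₁ w₂ v = 0 := by
  simp [pairLabel, h₁, h₂]

lemma eq_of_pairLabel_eq (h : pairLabel w₁ w₂ u = pairLabel w₁ w₂ v)
    (hu : pairLabel w₁ w₂ u ≠ 0) : u = v := by
  have : (1 : ZMod 4) ≠ 3 := by decide
  unfold pairLabel at *
  grind

/-- The labelling in `ℤ/4` of the hubs of both sides of a graph. -/
def hubLabel (a₁ a₂ b₁ b₂ v : V) : ZMod 4 :=
  pairLabel a₁ a₂ v + pairLabel b₁ b₂ v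

lemma hubLabel_comm (a₁ a₂ b₁ b₂ : V) : hubLabel a₁ a₂ b₁ b₂ = hubLabel b₁ b₂ a₁ a₂ :=
  funext fun _ => add_comm _ _

lemma IsHubPair.hubLabel_eq_right (ha : IsHubPair G B A a₁ a₂) (hv : v ∈ B) :
    hubLabel a₁ a₂ b₁ b₂ v = pairLabel b₁ b₂ v := by
  rw [hubLabel, pairLabel_eq_zero (ha.adj_left v hv).ne (ha.adj_right v hv).ne, zero_add]

lemma IsHubPair.hubLabel_eq_left (hb : IsHubPair G A B b₁ b₂) (hv : v ∈ A) :
    hubLabel a₁ a₂ b₁ b₂ v = pairLabel a₁ a₂ v := by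
  rw [hubLabel_comm, hb.hubLabel_eq_right hv]

lemma RainbowJoined.of_mem_same_side (ha : IsHubPair G B A a₁ a₂) (hb : IsHubPair G A B b₁ b₂)
    (hu : u ∈ A) (hv : v ∈ A) :
    RainbowJoined G (labelSumColouring (hubLabel a₁ a₂ b₁ b₂)) u v := by
  by_cases huv : hubLabel a₁ a₂ b₁ b₂ u = hubLabel a₁ a₂ b₁ b₂ v
  swap
  · exact .of_adj_adj_of_label_ne (hb.adj_left u hu) (hb.adj_left v hv).symm huv
  rw [hb.hubLabel_eq_left hu, hb.hubLabel_eq_left hv] at huv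
  by_cases hu₀ : pairLabel a₁ a₂ u = 0
  swap
  · exact eq_of_pairLabel_eq huv hu₀ ▸ .refl u
  refine .of_walk (.cons (hb.adj_left u hu) (.cons (ha.adj_left b₁ hb.mem_left)
    (.cons (hb.adj_right a₁ ha.mem_left) (hb.adj_right v hv).symm.toWalk))) ?_
  simp only [Adj.toWalk, Walk.edges_cons, Walk.edges_nil, List.map_cons, List.map_nil,
    labelSumColouring_mk, hb.hubLabel_eq_left hu, hb.hubLabel_eq_left hv,
    hb.hubLabel_eq_left ha.mem_left, ha.hubLabel_eq_right hb.mem_left,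
    ha.hubLabel_eq_right hb.mem_right, hu₀, huv ▸ hu₀, pairLabel_left, pairLabel_right hb.ne]
  decide

lemma RainbowJoined.of_mem_opposite_sides (ha : IsHubPair G B A a₁ a₂)
    (hb : IsHubPair G A B b₁ b₂) (hu : u ∈ A) (hv : v ∈ B) :
    RainbowJoined G (labelSumColouring (hubLabel a₁ a₂ b₁ b₂)) u v := by
  by_cases hua₁ : u = a₁
  · exact .of_adj (hua₁ ▸ (ha.adj_left v hv).symm)
  by_cases hua₂ : u = a₂
  · exact .of_adj (hua₂ ▸ (ha.adj_right v hv).symm)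
  by_cases hvb₁ : v = b₁
  · exact .of_adj (hvb₁ ▸ hb.adj_left u hu)
  by_cases hvb₂ : v = b₂
  · exact .of_adj (hvb₂ ▸ hb.adj_right u hu)
  refine .of_walk (.cons (hb.adj_left u hu) (.cons (ha.adj_right b₁ hb.mem_left)
    (ha.adj_right v hv).symm.toWalk)) ?_
  simp only [Adj.toWalk, Walk.edges_cons, Walk.edges_nil, List.map_cons, List.map_nil,
    labelSumColouring_mk, hb.hubLabel_eq_left hu, ha.hubLabel_eq_right hv,
    hb.hubLabel_eq_left ha.mem_right, ha.hubLabel_eq_right hb.mem_left,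
    pairLabel_eq_zero hua₁ hua₂, pairLabel_eq_zero hvb₁ hvb₂, pairLabel_left,
    pairLabel_right ha.ne]
  decide

theorem rainbowConnectedUnder_of_isHubPair (hAB : A ∪ B = univ) (ha : IsHubPair G B A a₁ a₂)
    (hb : IsHubPair G A B b₁ b₂) :
    RainbowConnectedUnder G (labelSumColouring (hubLabel a₁ a₂ b₁ b₂)) := by
  have mem_side : ∀ v, v ∈ A ∨ v ∈ B := eq_univ_iff_forall.1 hAB
  intro u v
  rcases mem_side u with hu | hu <;> rcases mem_side v with hv | hv
  · exact RainbowJoined.of_mem_same_side ha hb hu hv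
  · exact RainbowJoined.of_mem_opposite_sides ha hb hu hv
  · exact (RainbowJoined.of_mem_opposite_sides ha hb hv hu).symm
  · exact hubLabel_comm a₁ a₂ b₁ b₂ ▸ RainbowJoined.of_mem_same_side hb ha hu hv

end HubPair

section Chain

variable {V : Type*} {G : SimpleGraph V} {S T : Set V}

/-- The neighbourhoods of the vertices of `S` are linearly ordered by inclusion. -/
def HasNestedNeighborhoods (G : SimpleGraph V) (S : Set V) : Prop :=
  ∀ u ∈ S, ∀ v ∈ S, G.neighborSet u ⊆ G.neighborSet v ∨ G.neighborSet v ⊆ G.neighborSet u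

lemma HasNestedNeighborhoods.of_neighborSet_subset (hS : HasNestedNeighborhoods G S)
    (hT : ∀ t ∈ T, G.neighborSet t ⊆ S) : HasNestedNeighborhoods G T := by
  intro u hu v hv
  by_contra! h
  obtain ⟨⟨x, hux, hvx⟩, ⟨y, hvy, huy⟩⟩ := h.imp not_subset.1 not_subset.1
  rcases hS x (hT u hu hux) y (hT v hv hvy) with h | h
  · exact huy (h hux.symm).symm
  · exact hvx (h hvy.symm).symm

lemma HasNestedNeighborhoods.exists_forall_neighborSet_subset (hS : HasNestedNeighborhoods G S)
    (hfin : S.Finite) (hne : S.Nonempty) :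
    ∃ u ∈ S, ∀ v ∈ S, G.neighborSet u ⊆ G.neighborSet v := by
  obtain ⟨u, hu, hmin⟩ := hfin.exists_minimalFor G.neighborSet S hne
  exact ⟨u, hu, fun v hv => (hS u hu v hv).elim id (hmin hv)⟩

lemma HasNestedNeighborhoods.exists_isHubPair (hS : HasNestedNeighborhoods G S)
    (hfin : S.Finite) (hne : S.Nonempty) (hT : ∀ v ∈ S, G.neighborSet v ⊆ T)
    (hnontrivial : ∀ v ∈ S, (G.neighborSet v).Nontrivial) : ∃ w₁ w₂, IsHubPair G S T w₁ w₂ := by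
  obtain ⟨u, hu, hsub⟩ := hS.exists_forall_neighborSet_subset hfin hne
  obtain ⟨w₁, h₁, w₂, h₂, hw⟩ := hnontrivial u hu
  exact ⟨w₁, w₂, hT u hu h₁, hT u hu h₂, hw, fun v hv => hsub v hv h₁, fun v hv => hsub v hv h₂⟩

lemma IsChainGraph.exists_isBipartiteWith (h : IsChainGraph G) :
    ∃ A B, A ∪ B = univ ∧ G.IsBipartiteWith A B ∧ HasNestedNeighborhoods G A := by
  obtain ⟨A, B, hAB, hdisj, hindep, hA⟩ := h
  have mem_side : ∀ v, v ∈ A ∨ v ∈ B := eq_univ_iff_forall.1 hAB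
  refine ⟨A, B, hAB, ⟨hdisj, fun u v huv => ?_⟩, hA⟩
  have := hindep u v huv
  have := mem_side u
  have := mem_side v
  tauto

lemma IsChainGraph.exists_isHubPair [Finite V] [Nonempty V] (h : IsChainGraph G)
    (hnontrivial : ∀ v, (G.neighborSet v).Nontrivial) :
    ∃ A B, A ∪ B = univ ∧ (∃ a₁ a₂, IsHubPair G B A a₁ a₂) ∧ ∃ b₁ b₂, IsHubPair G A B b₁ b₂ := by
  obtain ⟨A, B, hAB, hbip, hA⟩ := h.exists_isBipartiteWith
  have subA (b : V) (hb : b ∈ B) : G.neighborSet b ⊆ A :=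
    isBipartiteWith_neighborSet_subset hbip.symm hb
  have subB (a : V) (ha : a ∈ A) : G.neighborSet a ⊆ B :=
    isBipartiteWith_neighborSet_subset hbip ha
  have neA : A.Nonempty := by
    obtain ⟨v⟩ := ‹Nonempty V›
    rcases eq_univ_iff_forall.1 hAB v with hv | hv
    · exact ⟨v, hv⟩
    · exact (hnontrivial v).nonempty.mono (subA v hv)
  have neB : B.Nonempty := by
    obtain ⟨a, ha⟩ := neA
    exact (hnontrivial a).nonempty.mono (subB a ha)
  exact ⟨A, B, hAB,
    (hA.of_neighborSet_subset subA).exists_isHubPair B.toFinite neB subA fun v _ => hnontrivial v,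
    hA.exists_isHubPair A.toFinite neA subB fun v _ => hnontrivial v⟩

end Chain

/-- For a finite connected chain graph `G` with minimum degree at
least 2, `diam(G) ≤ rc(G) ≤ 4`. -/
theorem stmt_6 {V : Type*} [Fintype V] (G : SimpleGraph V) (hG : G.Connected)
    (hch : IsChainGraph G) (hδ : ∀ v : V, 2 ≤ deg G v) :
    graphDiam G ≤ rc G ∧ rc G ≤ 4 := by
  classical
  have := hG.nonempty
  have hnontrivial (v : V) : (G.neighborSet v).Nontrivial :=
    one_lt_ncard_iff_nontrivial.1 (hδ v)
  obtain ⟨A, B, hAB, ⟨a₁, a₂, ha⟩, b₁, b₂, hb⟩ := hch.exists_isHubPair hnontrivial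
  have hrainbow := rainbowConnectedUnder_of_isHubPair hAB ha hb
  have hlt (e : Sym2 V) (_ : e ∈ G.edgeSet) : labelSumColouring (hubLabel a₁ a₂ b₁ b₂) e < 4 :=
    labelSumColouring_lt _ e
  exact ⟨hrainbow.graphDiam_le_rc hlt, hrainbow.rc_le hlt⟩
end
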